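/- Let A_1 and A_2 be real 2×2 matrices, each with determinant 1, and suppose there exist complex 2×2 unitary matrices U_1, U_2, V such that U_iᴴ A_i V is upper triangular with both diagonal entries equal to 1 for i = 1, 2. Then there exist real orthogonal 4×4 matrices 𝒰_1, 𝒰_2, 𝒱 such that for i = 1, 2 the matrix 𝒰_iᵀ (I_2 ⊗ A_i) 𝒱 is upper triangular with all four diagonal entries equal to 1; moreover 𝒱 can be chosen of the orthogonal space-time block-code form with rows (a, −c, b, d), (b, d, −a, c), (c, a, d, −b), (−d, b, c, a) for some real numbers a, b, c, d. -/

import Mathlib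

open Matrix

/-- The `4 × 4` block-diagonal extension `I_2 ⊗ A` of a `2 × 2` real matrix. -/
def blockDiag2 (A : Matrix (Fin 2) (Fin 2) ℝ) : Matrix (Fin 4) (Fin 4) ℝ :=
  !![A 0 0, A 0 1, 0, 0;
     A 1 0, A 1 1, 0, 0;
     0, 0, A 0 0, A 0 1;
     0, 0, A 1 0, A 1 1]

/-- The orthogonal space-time block-code (real orthogonal design) structure. -/
def stbc (a b c d : ℝ) : Matrix (Fin 4) (Fin 4) ℝ :=
  !![a, -c, b, d;
     b, d, -a, c;
     c, a, d, -b;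
     -d, b, c, a]

/-!
Identify `ℂ²` with `ℝ⁴` through `v ↦ (Re v, Im v)`, so that `I₂ ⊗ A` is the action of the real
matrix `A` on `ℂ²`. The block code with first column `v` has columns `v`, `iv`, `w`, `-iw`, where
`w = J v̄ = (v̄₁, -v̄₀)` is orthogonal to `v`. Let `u` and `v` be the first columns of `U` and `V`;
the triangularization gives `A v = u`. Being real, `A` maps `v, iv` to `u, iu`, while
`Aᵀ J A = det A • J` says that `Aᵀ` maps the last two columns of the code of `u` to `det A` times
those of the code of `v`. As both codes are orthogonal, sandwiching `I₂ ⊗ A` between them gives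
an upper triangular matrix with diagonal `(1, 1, det A, det A)`. Comparing determinants in the
unitary triangularization gives `det A = ±1`, and this sign is absorbed into the last two columns
of the left factor.
-/

section Triangularization

lemma mulVec_col_zero_of_isUpperTriangular {n : ℕ} {R : Type*} [CommRing R]
    {L U M V : Matrix (Fin (n + 1)) (Fin (n + 1)) R} (hLU : L * U = 1)
    (htri : (L * M * V).IsUpperTriangular) (hdiag : (L * M * V) 0 0 = 1) :
    M *ᵥ V.col 0 = U.col 0 := by
  have hcol : (L * M * V).col 0 = Pi.single 0 1 := by
    ext k
    rcases eq_or_ne k 0 with rfl | hk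
    · simpa using hdiag
    · simpa [hk] using htri (Fin.pos_of_ne_zero hk)
  calc M *ᵥ V.col 0 = (U * L) *ᵥ M *ᵥ V.col 0 := by rw [mul_eq_one_comm.mp hLU, one_mulVec]
    _ = U *ᵥ (L * M * V).col 0 := by
      simp only [← mulVec_single_one, mulVec_mulVec, Matrix.mul_assoc]
    _ = U.col 0 := by rw [hcol, mulVec_single_one]

lemma norm_det_of_mem_unitaryGroup {n 𝕜 : Type*} [Fintype n] [DecidableEq n] [RCLike 𝕜]
    {U : Matrix n n 𝕜} (hU : U ∈ unitaryGroup n 𝕜) : ‖U.det‖ = 1 := by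
  have hdet : U.det ∈ unitary 𝕜 := det_of_mem_unitary hU
  exact CStarRing.norm_of_mem_unitary hdet

lemma norm_det_conjTranspose_mul_mul {n 𝕜 : Type*} [Fintype n] [DecidableEq n] [RCLike 𝕜]
    {U V : Matrix n n 𝕜} (hU : U ∈ unitaryGroup n 𝕜) (hV : V ∈ unitaryGroup n 𝕜)
    (M : Matrix n n 𝕜) : ‖(Uᴴ * M * V).det‖ = ‖M.det‖ := by
  rw [det_mul, det_mul, det_conjTranspose, norm_mul, norm_mul, norm_star,
    norm_det_of_mem_unitaryGroup hU, norm_det_of_mem_unitaryGroup hV, one_mul, mul_one]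

lemma sq_det_eq_one_of_unitary_triangularization {n : Type*} [Fintype n] [LinearOrder n]
    {A : Matrix n n ℝ} {U V : Matrix n n ℂ} (hU : U ∈ unitaryGroup n ℂ)
    (hV : V ∈ unitaryGroup n ℂ) (htri : (Uᴴ * A.map Complex.ofReal * V).IsUpperTriangular)
    (hdiag : ∀ k, (Uᴴ * A.map Complex.ofReal * V) k k = 1) : A.det ^ 2 = 1 := by
  have hdet : (A.map Complex.ofReal).det = A.det := (Complex.ofRealHom.map_det A).symm
  have hnorm := norm_det_conjTranspose_mul_mul hU hV (A.map Complex.ofReal)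
  rw [det_of_isUpperTriangular htri, hdet, Complex.norm_real] at hnorm
  rw [← sq_abs, ← Real.norm_eq_abs, ← hnorm]
  simp [hdiag]

lemma star_col_dotProduct_col {m n R : Type*} [Fintype m] [DecidableEq n] [Semiring R] [StarRing R]
    {U : Matrix m n R} (hU : Uᴴ * U = 1) (j : n) : star (U.col j) ⬝ᵥ U.col j = 1 :=
  calc star (U.col j) ⬝ᵥ U.col j = (Uᴴ * U) j j := rfl
    _ = 1 := by rw [hU, one_apply_eq]

end Triangularization

/-- The orthogonal space-time block code of a vector `v` of `ℂ²`. In the coordinates `(Re, Im)` on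
`ℂ²`, its columns are `v`, `iv`, `w`, `-iw` with `w = (v̄₁, -v̄₀)`. -/
def spaceTimeCode (v : Fin 2 → ℂ) : Matrix (Fin 4) (Fin 4) ℝ :=
  stbc (v 0).re (v 1).re (v 0).im (-(v 1).im)

/-- The space-time block code of `v` with its last two columns multiplied by `ε`. It is the left
factor of the triangularization, with `ε = det A = ±1`. -/
def signedSpaceTimeCode (ε : ℝ) (v : Fin 2 → ℂ) : Matrix (Fin 4) (Fin 4) ℝ :=
  spaceTimeCode v * diagonal ![1, 1, ε, ε]

lemma stbc_transpose_mul_self (a b c d : ℝ) :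
    (stbc a b c d)ᵀ * stbc a b c d = (a ^ 2 + b ^ 2 + c ^ 2 + d ^ 2) • 1 := by
  ext k l
  fin_cases k <;> fin_cases l <;> simp [stbc, mul_apply, Fin.sum_univ_four] <;> ring

lemma spaceTimeCode_transpose_mul_self (v : Fin 2 → ℂ) :
    (spaceTimeCode v)ᵀ * spaceTimeCode v = (star v ⬝ᵥ v).re • 1 := by
  have hnorm : (star v ⬝ᵥ v).re =
      (v 0).re ^ 2 + (v 1).re ^ 2 + (v 0).im ^ 2 + (-(v 1).im) ^ 2 := by
    simp only [dotProduct, Fin.sum_univ_two, Pi.star_apply, Complex.star_def, Complex.add_re,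
      Complex.mul_re, Complex.conj_re, Complex.conj_im]
    ring
  rw [spaceTimeCode, stbc_transpose_mul_self, hnorm]

lemma signedSpaceTimeCode_transpose_mul_self {ε : ℝ} {v : Fin 2 → ℂ} (hε : ε ^ 2 = 1)
    (hv : star v ⬝ᵥ v = 1) : (signedSpaceTimeCode ε v)ᵀ * signedSpaceTimeCode ε v = 1 := by
  rw [signedSpaceTimeCode, transpose_mul, diagonal_transpose, Matrix.mul_assoc,
    ← Matrix.mul_assoc _ (spaceTimeCode v), spaceTimeCode_transpose_mul_self, hv, Complex.one_re,
    one_smul, Matrix.one_mul, diagonal_mul_diagonal, ← diagonal_one, diagonal_eq_diagonal_iff]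
  intro k
  fin_cases k <;> simp [← sq, hε]

section RealAction

variable (A : Matrix (Fin 2) (Fin 2) ℝ) (v : Fin 2 → ℂ)

lemma blockDiag2_mul_spaceTimeCode_apply_of_lt (k : Fin 4) {l : Fin 4} (hl : l < 2) :
    (blockDiag2 A * spaceTimeCode v) k l = spaceTimeCode (A.map Complex.ofReal *ᵥ v) k l := by
  obtain rfl | rfl : l = 0 ∨ l = 1 := by lia
  all_goals
    fin_cases k <;>
      simp [blockDiag2, spaceTimeCode, stbc, mul_apply, Fin.sum_univ_four, mulVec, dotProduct] <;>
      ring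

lemma spaceTimeCode_mulVec_transpose_mul_blockDiag2_apply_of_le {k : Fin 4} (hk : 2 ≤ k)
    (l : Fin 4) : ((spaceTimeCode (A.map Complex.ofReal *ᵥ v))ᵀ * blockDiag2 A) k l =
      A.det * (spaceTimeCode v)ᵀ k l := by
  obtain rfl | rfl : k = 2 ∨ k = 3 := by lia
  all_goals
    fin_cases l <;>
      simp [blockDiag2, spaceTimeCode, stbc, mul_apply, Fin.sum_univ_four, mulVec, dotProduct,
        det_fin_two] <;>
      ring

lemma spaceTimeCode_transpose_mul_blockDiag2_mul_apply_of_lt (k : Fin 4) {l : Fin 4} (hl : l < 2) :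
    ((spaceTimeCode (A.map Complex.ofReal *ᵥ v))ᵀ * blockDiag2 A * spaceTimeCode v) k l =
      (star (A.map Complex.ofReal *ᵥ v) ⬝ᵥ (A.map Complex.ofReal *ᵥ v)).re *
        (1 : Matrix (Fin 4) (Fin 4) ℝ) k l := by
  rw [Matrix.mul_assoc, mul_apply]
  simp only [blockDiag2_mul_spaceTimeCode_apply_of_lt A v _ hl]
  rw [← mul_apply, spaceTimeCode_transpose_mul_self, Matrix.smul_apply, smul_eq_mul]

lemma spaceTimeCode_transpose_mul_blockDiag2_mul_apply_of_le {k : Fin 4} (hk : 2 ≤ k) (l : Fin 4) :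
    ((spaceTimeCode (A.map Complex.ofReal *ᵥ v))ᵀ * blockDiag2 A * spaceTimeCode v) k l =
      A.det * ((star v ⬝ᵥ v).re * (1 : Matrix (Fin 4) (Fin 4) ℝ) k l) := by
  rw [mul_apply]
  simp only [spaceTimeCode_mulVec_transpose_mul_blockDiag2_apply_of_le A v hk, mul_assoc]
  rw [← Finset.mul_sum, ← mul_apply, spaceTimeCode_transpose_mul_self, Matrix.smul_apply,
    smul_eq_mul]

lemma signedSpaceTimeCode_transpose_mul_blockDiag2_mul_apply (ε : ℝ) (u : Fin 2 → ℂ) (k l : Fin 4) :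
    ((signedSpaceTimeCode ε u)ᵀ * blockDiag2 A * spaceTimeCode v) k l =
      ![1, 1, ε, ε] k * ((spaceTimeCode u)ᵀ * blockDiag2 A * spaceTimeCode v) k l := by
  rw [signedSpaceTimeCode, transpose_mul, diagonal_transpose, Matrix.mul_assoc, Matrix.mul_assoc,
    ← Matrix.mul_assoc _ (blockDiag2 A), diagonal_mul]

lemma signedSpaceTimeCode_transpose_mul_blockDiag2_mul_isUpperTriangular (ε : ℝ) :
    ((signedSpaceTimeCode ε (A.map Complex.ofReal *ᵥ v))ᵀ * blockDiag2 A *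
      spaceTimeCode v).IsUpperTriangular := by
  intro k l (hlk : l < k)
  have hone : (1 : Matrix (Fin 4) (Fin 4) ℝ) k l = 0 := one_apply_ne hlk.ne'
  rw [signedSpaceTimeCode_transpose_mul_blockDiag2_mul_apply]
  rcases lt_or_ge l 2 with hl | hl
  · rw [spaceTimeCode_transpose_mul_blockDiag2_mul_apply_of_lt A v k hl, hone, mul_zero, mul_zero]
  · have hk : 2 ≤ k := hl.trans hlk.le
    rw [spaceTimeCode_transpose_mul_blockDiag2_mul_apply_of_le A v hk, hone, mul_zero, mul_zero,
      mul_zero]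

variable {A v}

lemma signedSpaceTimeCode_transpose_mul_blockDiag2_mul_apply_self (hdet : A.det ^ 2 = 1)
    (hv : star v ⬝ᵥ v = 1)
    (hAv : star (A.map Complex.ofReal *ᵥ v) ⬝ᵥ (A.map Complex.ofReal *ᵥ v) = 1) (k : Fin 4) :
    ((signedSpaceTimeCode A.det (A.map Complex.ofReal *ᵥ v))ᵀ * blockDiag2 A *
      spaceTimeCode v) k k = 1 := by
  rw [signedSpaceTimeCode_transpose_mul_blockDiag2_mul_apply]
  rcases lt_or_ge k 2 with hk | hk
  · rw [spaceTimeCode_transpose_mul_blockDiag2_mul_apply_of_lt A v k hk, hAv]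
    obtain rfl | rfl : k = 0 ∨ k = 1 := by lia
    all_goals simp
  · rw [spaceTimeCode_transpose_mul_blockDiag2_mul_apply_of_le A v hk, hv]
    obtain rfl | rfl : k = 2 ∨ k = 3 := by lia
    all_goals simp [← sq, hdet]

end RealAction

theorem real_space_time_twoGMD_general {ι : Type*}
    (A : ι → Matrix (Fin 2) (Fin 2) ℝ) (U : ι → Matrix (Fin 2) (Fin 2) ℂ)
    (V : Matrix (Fin 2) (Fin 2) ℂ) (hU : ∀ i, (U i)ᴴ * U i = 1) (hV : Vᴴ * V = 1)
    (htri : ∀ i, ((U i)ᴴ * (A i).map Complex.ofReal * V).IsUpperTriangular)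
    (hdiag : ∀ i k, ((U i)ᴴ * (A i).map Complex.ofReal * V) k k = 1) :
    ∃ (𝒰 : ι → Matrix (Fin 4) (Fin 4) ℝ) (a b c d : ℝ),
      (stbc a b c d)ᵀ * stbc a b c d = 1 ∧ ∀ i, (𝒰 i)ᵀ * 𝒰 i = 1 ∧
        ((𝒰 i)ᵀ * blockDiag2 (A i) * stbc a b c d).IsUpperTriangular ∧
        ∀ k, ((𝒰 i)ᵀ * blockDiag2 (A i) * stbc a b c d) k k = 1 := by
  have hv : star (V.col 0) ⬝ᵥ V.col 0 = 1 := star_col_dotProduct_col hV 0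
  refine ⟨fun i => signedSpaceTimeCode (A i).det ((A i).map Complex.ofReal *ᵥ V.col 0), _, _, _, _,
    (spaceTimeCode_transpose_mul_self (V.col 0)).trans (by simp [hv]), fun i => ?_⟩
  have hAv : (A i).map Complex.ofReal *ᵥ V.col 0 = (U i).col 0 :=
    mulVec_col_zero_of_isUpperTriangular (hU i) (htri i) (hdiag i 0)
  have hu : star ((A i).map Complex.ofReal *ᵥ V.col 0) ⬝ᵥ ((A i).map Complex.ofReal *ᵥ V.col 0) =
      1 := by rw [hAv, star_col_dotProduct_col (hU i) 0]
  have hdet : (A i).det ^ 2 = 1 := sq_det_eq_one_of_unitary_triangularization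
    (mem_unitaryGroup_iff'.mpr (hU i)) (mem_unitaryGroup_iff'.mpr hV) (htri i) (hdiag i)
  exact ⟨signedSpaceTimeCode_transpose_mul_self hdet hu,
    signedSpaceTimeCode_transpose_mul_blockDiag2_mul_isUpperTriangular _ _ _,
    signedSpaceTimeCode_transpose_mul_blockDiag2_mul_apply_self hdet hv hu⟩

/-- If two real `2 × 2` unit-determinant matrices admit a simultaneous
unit-diagonal triangularization by complex unitaries, then their `4 × 4`
block-diagonal extensions `I_2 ⊗ Aᵢ` admit one by *real orthogonal* matrices,
in which the common right matrix `𝒱` has the orthogonal space-time block-code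
form. -/
theorem real_space_time_twoGMD
    (A₁ A₂ : Matrix (Fin 2) (Fin 2) ℝ) (h₁ : A₁.det = 1) (h₂ : A₂.det = 1)
    (U₁ U₂ V : Matrix (Fin 2) (Fin 2) ℂ)
    (hU₁ : U₁ᴴ * U₁ = 1) (hU₂ : U₂ᴴ * U₂ = 1) (hV : Vᴴ * V = 1)
    (htri₁ : ∀ k l : Fin 2, l < k → (U₁ᴴ * A₁.map Complex.ofReal * V) k l = 0)
    (hdiag₁ : ∀ k : Fin 2, (U₁ᴴ * A₁.map Complex.ofReal * V) k k = 1)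
    (htri₂ : ∀ k l : Fin 2, l < k → (U₂ᴴ * A₂.map Complex.ofReal * V) k l = 0)
    (hdiag₂ : ∀ k : Fin 2, (U₂ᴴ * A₂.map Complex.ofReal * V) k k = 1) :
    ∃ (𝒰₁ 𝒰₂ : Matrix (Fin 4) (Fin 4) ℝ) (a b c d : ℝ),
      𝒰₁ᵀ * 𝒰₁ = 1 ∧ 𝒰₂ᵀ * 𝒰₂ = 1 ∧ (stbc a b c d)ᵀ * stbc a b c d = 1 ∧
      (∀ k l : Fin 4, l < k → (𝒰₁ᵀ * blockDiag2 A₁ * stbc a b c d) k l = 0) ∧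
      (∀ k : Fin 4, (𝒰₁ᵀ * blockDiag2 A₁ * stbc a b c d) k k = 1) ∧
      (∀ k l : Fin 4, l < k → (𝒰₂ᵀ * blockDiag2 A₂ * stbc a b c d) k l = 0) ∧
      (∀ k : Fin 4, (𝒰₂ᵀ * blockDiag2 A₂ * stbc a b c d) k k = 1) := by
  obtain ⟨𝒰, a, b, c, d, h𝒱, h𝒰⟩ := real_space_time_twoGMD_general ![A₁, A₂] ![U₁, U₂] V
    (Fin.forall_fin_two.2 ⟨hU₁, hU₂⟩) hV (Fin.forall_fin_two.2 ⟨htri₁, htri₂⟩)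
    (Fin.forall_fin_two.2 ⟨hdiag₁, hdiag₂⟩)
  exact ⟨𝒰 0, 𝒰 1, a, b, c, d, (h𝒰 0).1, (h𝒰 1).1, h𝒱, (h𝒰 0).2.1, (h𝒰 0).2.2, (h𝒰 1).2.1,
    (h𝒰 1).2.2⟩
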